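/- Let p be a prime and A ∈ GL_N(ℤ) an integer matrix invertible over ℤ with A ≡ 1 (mod p), and assume that no complex root of the characteristic polynomial of A is a root of unity. Set ε = sign(det(A − 1)) if p is odd and ε = sign(det(A² − 1)) if p = 2 (a sign in {±1}, computed over ℝ). Viewing A in M_N(ℤ_p), let L = log(A) = Σ_{j=1}^∞ (−1)^{j−1}(A−1)^j / j ∈ M_N(ℚ_p). Then det(A^{p^n} − 1) is a nonzero integer for every n ∈ ℕ, det(L) ≠ 0, and the sequence of positive integers t_n = |det(A^{p^n} − 1)| · p^{−ν_p(det(A^{p^n} − 1))} (the p′-part of |det(A^{p^n} − 1)|) converges in ℤ_p to ε · det(L) · p^{−v_p(det L)}, where v_p(det L) denotes the p-adic valuation of det(L) ∈ ℚ_p. -/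

import Mathlib

open Filter

/-! The `p`-adic logarithm is the limit of difference quotients: since
`(x^m - 1) / m = ∑ j, (m - 1).choose j / (j + 1) * (x - 1)^(j + 1)` and
`(p^n - 1).choose j → (-1).choose j = (-1)^j`, dominated convergence gives
`(A^{p^n} - 1) / p^n → log A`, and hence the convergence of the determinants `d_n / p^{nN}`,
where `d_n = det(A^{p^n} - 1)`. For `n ≥ 1` one has `A^{p^n} ≡ 1 (mod p²)`, so the quotient
`(A^{p^{n+1}} - 1) / (A^{p^n} - 1) = ∑ i < p, A^{p^n i}` is `p (1 + p G)` with `G` integral and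
`d_{n+1} / d_n` is `p^N` times an integer `≡ 1 (mod p)`. Thus `d_n / p^{nN}` has constant absolute
value, its limit `det(log A)` is nonzero, and the `p′`-part, which is continuous away from `0`,
passes to the limit. Finally `d_{n+1} / d_n = det Φ_{p^{n+1}}(A)` is nonnegative when
`p^{n+1} > 2`: a real polynomial without real roots is a product of factors `(X - a)² + b²`, and
`det((A - a)² + b²) = |det(A - a + i b)|²`. So the sign of `d_n` is eventually constant.
-/

section Congruence

variable {R : Type*} [Ring R]

theorem dvd_pow_sub_one_of_dvd_sub_one {c x : R} (h : c ∣ x - 1) (n : ℕ) : c ∣ x ^ n - 1 :=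
  h.trans ⟨_, (mul_geom_sum x n).symm⟩

theorem dvd_geom_sum_sub_natCast {c x : R} (h : c ∣ x - 1) (n : ℕ) :
    c ∣ ∑ i ∈ Finset.range n, x ^ i - (n : R) := by
  have hsum : ∑ i ∈ Finset.range n, x ^ i - (n : R) = ∑ i ∈ Finset.range n, (x ^ i - 1) := by
    simp [Finset.sum_sub_distrib]
  rw [hsum]
  exact Finset.dvd_sum fun i _ => dvd_pow_sub_one_of_dvd_sub_one h i

theorem natCast_sq_dvd_pow_sub_one {m : ℕ} {x : R} (h : (m : R) ∣ x - 1) :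
    (m : R) ^ 2 ∣ x ^ m - 1 := by
  obtain ⟨y, hy⟩ := h
  obtain ⟨z, hz⟩ : (m : R) ∣ ∑ i ∈ Finset.range m, x ^ i :=
    (dvd_sub_left dvd_rfl).mp (dvd_geom_sum_sub_natCast ⟨y, hy⟩ m)
  refine ⟨y * z, ?_⟩
  calc x ^ m - 1 = m * (y * m) * z := by rw [← mul_geom_sum, hy, hz]; simp only [mul_assoc]
    _ = m ^ 2 * (y * z) := by rw [← Nat.cast_comm m y, sq]; simp only [mul_assoc]

end Congruence

section Determinant

variable {ι S : Type*} [Fintype ι] [DecidableEq ι] [CommRing S]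

theorem natCast_dvd_of_forall_dvd_apply {m : ℕ} {B : Matrix ι ι S} (h : ∀ i j, (m : S) ∣ B i j) :
    (m : Matrix ι ι S) ∣ B := by
  choose C hC using h
  exact ⟨Matrix.of C, by ext i j; simp [← nsmul_eq_mul, hC]⟩

theorem dvd_det_one_add_smul_sub_one (c : S) (M : Matrix ι ι S) : c ∣ (1 + c • M).det - 1 := by
  rw [Matrix.det_one_add_smul, add_assoc, add_sub_cancel_left]
  exact dvd_add (dvd_mul_left _ _) (dvd_mul_of_dvd_right (dvd_pow_self c two_ne_zero) _)

theorem exists_det_pow_sub_one_eq {m : ℕ} {A : Matrix ι ι S}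
    (hA : (m : Matrix ι ι S) ^ 2 ∣ A - 1) :
    ∃ u : S, (m : S) ∣ u - 1 ∧ (A ^ m - 1).det = (m : S) ^ Fintype.card ι * (A - 1).det * u := by
  obtain ⟨G, hG⟩ := dvd_geom_sum_sub_natCast hA m
  have hgeom : ∑ i ∈ Finset.range m, A ^ i = (m : S) • (1 + (m : S) • G) := by
    rw [eq_add_of_sub_eq' hG, sq, mul_assoc]
    simp [← nsmul_eq_mul, Nat.cast_smul_eq_nsmul]
  refine ⟨_, dvd_det_one_add_smul_sub_one (m : S) G, ?_⟩
  rw [← mul_geom_sum, hgeom, Matrix.det_mul, Matrix.det_smul]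
  ring

theorem exists_det_pow_pow_sub_one_eq {m : ℕ} {A : Matrix ι ι S}
    (hA : (m : Matrix ι ι S) ∣ A - 1) (n : ℕ) :
    ∃ u : S, (m : S) ∣ u - 1 ∧ (A ^ m ^ (n + 2) - 1).det =
      (m : S) ^ Fintype.card ι * (A ^ m ^ (n + 1) - 1).det * u := by
  have hsq : (m : Matrix ι ι S) ^ 2 ∣ A ^ m ^ (n + 1) - 1 := by
    rw [pow_succ m, pow_mul]
    exact natCast_sq_dvd_pow_sub_one (dvd_pow_sub_one_of_dvd_sub_one hA _)
  simpa only [← pow_mul, ← pow_succ] using exists_det_pow_sub_one_eq hsq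

end Determinant

section Eigenvalue

variable {ι : Type*} [Fintype ι] [DecidableEq ι]

theorem exists_isRoot_charpoly_pow_eq_one {K : Type*} [Field K] [IsAlgClosed K]
    {M : Matrix ι ι K} {k : ℕ} (hk : 0 < k) (h : (M ^ k - 1).det = 0) :
    ∃ ζ : K, M.charpoly.IsRoot ζ ∧ ζ ^ k = 1 := by
  have hone : (1 : K) ∈ spectrum K (M ^ k) := by
    rw [Matrix.mem_spectrum_iff_isRoot_charpoly, Polynomial.IsRoot, Matrix.eval_charpoly, map_one,
      ← neg_sub, Matrix.det_neg, h, mul_zero]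
  rw [spectrum.map_pow_of_pos M hk] at hone
  obtain ⟨ζ, hζ, hζk⟩ := hone
  exact ⟨ζ, Matrix.mem_spectrum_iff_isRoot_charpoly.mp hζ, hζk⟩

theorem det_pow_sub_one_ne_zero {A : Matrix ι ι ℤ}
    (hroot : ∀ ζ : ℂ, Polynomial.aeval ζ A.charpoly = 0 → ∀ n : ℕ, 0 < n → ζ ^ n ≠ 1)
    {k : ℕ} (hk : 0 < k) : (A ^ k - 1).det ≠ 0 := by
  intro h
  have hcast : ((Int.castRingHom ℂ).mapMatrix A ^ k - 1).det = 0 := by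
    rw [← map_pow, ← map_one (Int.castRingHom ℂ).mapMatrix, ← map_sub, ← RingHom.map_det, h,
      map_zero]
  obtain ⟨ζ, hζ, hζk⟩ := exists_isRoot_charpoly_pow_eq_one hk hcast
  refine hroot ζ ?_ k hk hζk
  rwa [RingHom.mapMatrix_apply, Matrix.charpoly_map, Polynomial.IsRoot, Polynomial.eval_map] at hζ

end Eigenvalue

section Sign

open Polynomial

variable {ι : Type*} [Fintype ι] [DecidableEq ι]

theorem det_sq_add_sq_nonneg {B C : Matrix ι ι ℝ} (h : Commute B C) : 0 ≤ (B ^ 2 + C ^ 2).det := by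
  set φ := Complex.ofRealHom.mapMatrix (m := ι)
  have hφ : φ B * φ C = φ C * φ B := (h.map φ).eq
  have hfactor : φ (B ^ 2 + C ^ 2) = (φ B + Complex.I • φ C) * (φ B - Complex.I • φ C) := by
    rw [map_add, map_pow, map_pow, add_mul, mul_sub, mul_sub, smul_mul_assoc, smul_mul_assoc,
      mul_smul_comm, mul_smul_comm, smul_smul, Complex.I_mul_I, hφ, neg_one_smul, sq, sq]
    abel
  have hconj : (φ B - Complex.I • φ C).det = starRingEnd ℂ (φ B + Complex.I • φ C).det := by
    rw [RingHom.map_det]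
    congr 1
    ext i j
    simp [φ, sub_eq_add_neg]
  have hdet : ((B ^ 2 + C ^ 2).det : ℂ) = Complex.normSq (φ B + Complex.I • φ C).det := by
    rw [← Complex.mul_conj, ← hconj, ← Matrix.det_mul, ← hfactor]
    exact RingHom.map_det Complex.ofRealHom _
  rw [Complex.ofReal_inj.mp hdet]
  exact Complex.normSq_nonneg _

theorem det_aeval_quadratic_nonneg (M : Matrix ι ι ℝ) (z : ℂ) :
    0 ≤ (aeval M (X ^ 2 - C (2 * z.re) * X + C (‖z‖ ^ 2))).det := by
  have hsq : (X ^ 2 - C (2 * z.re) * X + C (‖z‖ ^ 2) : ℝ[X]) = (X - C z.re) ^ 2 + C z.im ^ 2 := by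
    rw [Complex.sq_norm, Complex.normSq_apply]
    simp only [map_mul, map_add, map_ofNat]
    ring
  rw [hsq, map_add, map_pow, map_pow]
  exact det_sq_add_sq_nonneg ((Commute.all (X - C z.re) (C z.im)).map (aeval M))

theorem det_aeval_nonneg (M : Matrix ι ι ℝ) {f : ℝ[X]} (hf : f.Monic)
    (hroot : ∀ x, ¬ f.IsRoot x) : 0 ≤ (aeval M f).det := by
  induction hn : f.natDegree using Nat.strong_induction_on generalizing f with
  | _ n ih =>
    by_cases hdeg : f.natDegree = 0
    · rw [hf.natDegree_eq_zero.mp hdeg, map_one, Matrix.det_one]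
      exact zero_le_one
    obtain ⟨z, hz⟩ := Complex.exists_root (f := f.map (algebraMap ℝ ℂ)) (by
      rw [degree_map]
      exact natDegree_pos_iff_degree_pos.mp (Nat.pos_of_ne_zero hdeg))
    rw [IsRoot, eval_map_algebraMap] at hz
    have him : z.im ≠ 0 := fun him => hroot z.re <| by
      have hreal : algebraMap ℝ ℂ z.re = z := Complex.ext rfl him.symm
      rwa [← hreal, aeval_algebraMap_apply, map_eq_zero, coe_aeval_eq_eval] at hz
    obtain ⟨g, rfl⟩ := f.quadratic_dvd_of_aeval_eq_zero_im_ne_zero hz him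
    have hq : (X ^ 2 - C (2 * z.re) * X + C (‖z‖ ^ 2)).Monic := by monicity!
    have hqdeg : (X ^ 2 - C (2 * z.re) * X + C (‖z‖ ^ 2)).natDegree = 2 := by compute_degree!
    have hg := hq.of_mul_monic_left hf
    rw [map_mul, Matrix.det_mul]
    refine mul_nonneg (det_aeval_quadratic_nonneg M z) (ih g.natDegree ?_ hg ?_ rfl)
    · rw [← hn, hq.natDegree_mul hg, hqdeg]
      omega
    · exact fun x hx => hroot x (hx.dvd (dvd_mul_left _ _))

theorem det_aeval_cyclotomic_nonneg (M : Matrix ι ι ℤ) {d : ℕ} (hd : 2 < d) :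
    0 ≤ (aeval M (cyclotomic d ℤ)).det := by
  set φ := (Int.castRingHom ℝ).mapMatrix (m := ι)
  have hreal : 0 ≤ (aeval (φ M) (cyclotomic d ℝ)).det :=
    det_aeval_nonneg _ (cyclotomic.monic d ℝ) fun x => (cyclotomic_pos hd x).ne'
  have hmap : aeval (φ M) (cyclotomic d ℝ) = φ (aeval M (cyclotomic d ℤ)) := by
    rw [← map_cyclotomic_int]
    exact (aeval_map_algebraMap ℝ (φ M) _).trans (aeval_algHom_apply φ.toIntAlgHom M _)
  rw [hmap, ← RingHom.map_det] at hreal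
  exact Int.cast_nonneg_iff.mp hreal

theorem sign_det_pow_prime_pow_succ_sub_one {p : ℕ} [Fact p.Prime] {A : Matrix ι ι ℤ} {n : ℕ}
    (hn : 2 < p ^ (n + 1)) (hne : (A ^ p ^ (n + 1) - 1).det ≠ 0) :
    (A ^ p ^ (n + 1) - 1).det.sign = (A ^ p ^ n - 1).det.sign := by
  have hfactor : (A ^ p ^ (n + 1) - 1).det =
      (aeval A (cyclotomic (p ^ (n + 1)) ℤ)).det * (A ^ p ^ n - 1).det := by
    simpa using congrArg (fun f => (aeval A f).det)
      (cyclotomic_prime_pow_mul_X_pow_sub_one ℤ p n).symm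
  have hpos := (det_aeval_cyclotomic_nonneg A hn).lt_of_ne'
    (left_ne_zero_of_mul (hfactor ▸ hne))
  rw [hfactor, Int.sign_mul, Int.sign_eq_one_of_pos hpos, one_mul]

theorem sign_det_pow_prime_pow_sub_one {p : ℕ} [hp : Fact p.Prime] {A : Matrix ι ι ℤ}
    (hne : ∀ n, (A ^ p ^ n - 1).det ≠ 0) (n : ℕ) :
    (A ^ p ^ (n + 1) - 1).det.sign =
      if p = 2 then ((A ^ 2 - 1).det).sign else ((A - 1).det).sign := by
  have hstep {k : ℕ} (hk : 2 < p ^ (k + 1)) : ∀ m, k ≤ m →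
      (A ^ p ^ m - 1).det.sign = (A ^ p ^ k - 1).det.sign := by
    refine Nat.le_induction rfl fun m hm ih => ?_
    have hlt := hk.trans_le (Nat.pow_le_pow_right hp.out.pos (Nat.succ_le_succ hm))
    exact (sign_det_pow_prime_pow_succ_sub_one hlt (hne _)).trans ih
  split_ifs with h
  · subst h
    simpa using hstep (k := 1) (by norm_num) (n + 1) (Nat.le_add_left 1 n)
  · have hlt : 2 < p ^ (0 + 1) := by
      simpa using hp.out.two_le.lt_of_ne' h
    simpa using hstep hlt (n + 1) (Nat.zero_le _)

end Sign

section Logarithm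

open Topology

variable {p : ℕ} [hp : Fact p.Prime]

theorem tendsto_choose_prime_pow_sub_one (k : ℕ) :
    Tendsto (fun n : ℕ => ((p ^ n - 1).choose k : ℚ_[p])) atTop (𝓝 ((-1) ^ k)) := by
  have hbase : Tendsto (fun n : ℕ => ((p ^ n - 1 : ℕ) : ℤ_[p])) atTop (𝓝 (-1)) := by
    have hpow : Tendsto (fun n : ℕ => (p : ℤ_[p]) ^ n - 1) atTop (𝓝 (0 - 1)) :=
      (tendsto_pow_atTop_nhds_zero_of_norm_lt_one
        ((PadicInt.norm_lt_one_iff_dvd _).mpr dvd_rfl)).sub_const 1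
    simpa [Nat.cast_sub (Nat.one_le_pow _ _ hp.out.pos)] using hpow
  have hneg : Ring.choose (-1 : ℤ_[p]) k = (-1) ^ k := by
    simp [Ring.choose_neg, Ring.choose_natCast, Int.negOnePow_def, Units.smul_def]
  have hchoose : Tendsto (fun n : ℕ => (((p ^ n - 1).choose k : ℕ) : ℤ_[p])) atTop
      (𝓝 ((-1) ^ k)) := by
    simpa only [hneg, Function.comp_def, Ring.choose_natCast] using
      ((PadicInt.continuous_choose k).tendsto (-1)).comp hbase
  exact_mod_cast tendsto_subtype_rng.mp hchoose

theorem norm_inv_natCast_le (n : ℕ) : ‖(n : ℚ_[p])⁻¹‖ ≤ n := by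
  rcases eq_or_ne n 0 with rfl | hn
  · simp
  · rw [norm_inv, Padic.norm_eq_zpow_neg_valuation (Nat.cast_ne_zero.mpr hn),
      Padic.valuation_natCast, zpow_neg, inv_inv, zpow_natCast]
    exact_mod_cast Nat.le_of_dvd (Nat.pos_of_ne_zero hn) pow_padicValNat_dvd

variable {E : Type*} [NormedRing E] [NormedAlgebra ℚ_[p] E]

variable (p) in
/-- The `p`-adic logarithm `log x = ∑_{j ≥ 0} (-1)^j (x - 1)^{j+1} / (j + 1)` in a Banach algebra
over `ℚ_p`; the series converges for `‖x - 1‖ < 1`. -/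
noncomputable def padicLog (x : E) : E :=
  ∑' j : ℕ, ((-1 : ℚ_[p]) ^ j / (j + 1 : ℕ)) • (x - 1) ^ (j + 1)

theorem norm_div_smul_pow_succ_le {c : ℚ_[p]} (hc : ‖c‖ ≤ 1) (y : E) (j : ℕ) :
    ‖(c / (j + 1 : ℕ)) • y ^ (j + 1)‖ ≤ ((j + 1 : ℕ) : ℝ) * ‖y‖ ^ (j + 1) := by
  rw [norm_smul, div_eq_mul_inv, norm_mul]
  gcongr
  · exact (mul_le_of_le_one_left (norm_nonneg _) hc).trans (norm_inv_natCast_le _)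
  · exact norm_pow_le' y j.succ_pos

theorem summable_succ_mul_pow_succ {r : ℝ} (hr : ‖r‖ < 1) :
    Summable fun j : ℕ => ((j + 1 : ℕ) : ℝ) * r ^ (j + 1) := by
  have hsum : Summable fun j : ℕ => (j : ℝ) * r ^ j := by
    simpa using summable_pow_mul_geometric_of_norm_lt_one 1 hr
  exact (summable_nat_add_iff 1).mpr hsum

theorem inv_smul_pow_sub_one_eq_sum {𝕜 R : Type*} [Field 𝕜] [CharZero 𝕜] [Ring R] [Algebra 𝕜 R]
    {m : ℕ} (hm : m ≠ 0) (x : R) :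
    (m : 𝕜)⁻¹ • (x ^ m - 1) =
      ∑ j ∈ Finset.range m, ((m - 1).choose j / (j + 1 : ℕ) : 𝕜) • (x - 1) ^ (j + 1) := by
  obtain ⟨q, rfl⟩ := Nat.exists_eq_succ_of_ne_zero hm
  have hbinom : x ^ (q + 1) - 1 =
      ∑ j ∈ Finset.range (q + 1), ((q + 1).choose (j + 1) : 𝕜) • (x - 1) ^ (j + 1) := by
    nth_rw 1 [← sub_add_cancel x 1]
    rw [(Commute.one_right (x - 1)).add_pow, Finset.sum_range_succ']
    simp [Nat.cast_smul_eq_nsmul, Nat.cast_comm]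
  rw [hbinom, Finset.smul_sum]
  refine Finset.sum_congr rfl fun j _ => ?_
  have hchoose := congrArg (Nat.cast : ℕ → 𝕜) (Nat.add_one_mul_choose_eq q j)
  have hj : ((j + 1 : ℕ) : 𝕜) ≠ 0 := Nat.cast_ne_zero.mpr j.succ_ne_zero
  have hq : ((q + 1 : ℕ) : 𝕜) ≠ 0 := Nat.cast_ne_zero.mpr q.succ_ne_zero
  push_cast at hchoose hj hq
  rw [smul_smul, Nat.succ_sub_one]
  congr 1
  push_cast
  field_simp
  linear_combination -hchoose

variable [CompleteSpace E]

theorem tendsto_inv_smul_pow_sub_one_padicLog {x : E} (hx : ‖x - 1‖ < 1) :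
    Tendsto (fun n : ℕ => ((p : ℚ_[p]) ^ n)⁻¹ • (x ^ p ^ n - 1)) atTop (𝓝 (padicLog p x)) := by
  have hseries (n : ℕ) : ∑' j : ℕ, ((p ^ n - 1).choose j / (j + 1 : ℕ) : ℚ_[p]) •
      (x - 1) ^ (j + 1) = ((p : ℚ_[p]) ^ n)⁻¹ • (x ^ p ^ n - 1) := by
    have hpos : 0 < p ^ n := pow_pos hp.out.pos n
    rw [← Nat.cast_pow, inv_smul_pow_sub_one_eq_sum hpos.ne', tsum_eq_sum]
    intro j hj
    rw [Finset.mem_range, not_lt] at hj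
    rw [Nat.choose_eq_zero_of_lt (by omega), Nat.cast_zero, zero_div, zero_smul]
  refine (tendsto_tsum_of_dominated_convergence
    (summable_succ_mul_pow_succ ((norm_norm _).trans_lt hx))
    (fun j => ((tendsto_choose_prime_pow_sub_one j).div_const _).smul_const _)
    (Eventually.of_forall fun n j => norm_div_smul_pow_succ_le ?_ _ j)).congr hseries
  exact_mod_cast Padic.norm_int_le_one (p := p) ((p ^ n - 1).choose j)

theorem tendsto_sum_Icc_padicLog {x : E} (hx : ‖x - 1‖ < 1) :
    Tendsto (fun m : ℕ => ∑ j ∈ Finset.Icc 1 m,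
      ((-1 : ℚ_[p]) ^ (j - 1) / (j : ℚ_[p])) • (x - 1) ^ j) atTop (𝓝 (padicLog p x)) := by
  have hsum : Summable fun j : ℕ => ((-1 : ℚ_[p]) ^ j / (j + 1 : ℕ)) • (x - 1) ^ (j + 1) :=
    (summable_succ_mul_pow_succ ((norm_norm _).trans_lt hx)).of_norm_bounded fun j =>
      norm_div_smul_pow_succ_le (by simp) _ j
  refine hsum.hasSum.tendsto_sum_nat.congr fun m => ?_
  rw [← Finset.Ico_add_one_right_eq_Icc, Finset.range_eq_Ico]
  exact Finset.sum_Ico_add'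
    (fun j : ℕ => ((-1 : ℚ_[p]) ^ (j - 1) / (j : ℚ_[p])) • (x - 1) ^ j) 0 m 1

end Logarithm

section UltrametricMatrix

variable (ι K : Type*) [Fintype ι] [DecidableEq ι] [NormedField K] [IsUltrametricDist K]

/-- Matrices over an ultrametric field form a normed ring under the sup norm, whose topology is the
entrywise one. -/
@[reducible]
def ultrametricMatrixNormedRing : NormedRing (Matrix ι ι K) where
  __ := (Matrix.normedAddCommGroup : NormedAddCommGroup (Matrix ι ι K))
  __ := (inferInstance : Ring (Matrix ι ι K))
  norm_mul_le A B := by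
    let : NormedAddCommGroup (Matrix ι ι K) := Matrix.normedAddCommGroup
    refine (Matrix.norm_le_iff (by positivity)).mpr fun i j => ?_
    rw [Matrix.mul_apply]
    refine IsUltrametricDist.norm_sum_le_of_forall_le_of_nonneg (by positivity) fun k _ => ?_
    rw [norm_mul]
    gcongr <;> exact Matrix.norm_entry_le_entrywise_sup_norm _

/-- The normed algebra structure on matrices over an ultrametric field under the sup norm. -/
@[reducible]
def ultrametricMatrixNormedAlgebra :
    letI := ultrametricMatrixNormedRing ι K
    NormedAlgebra K (Matrix ι ι K) :=
  letI := ultrametricMatrixNormedRing ι K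
  { (inferInstance : Algebra K (Matrix ι ι K)) with
    norm_smul_le := fun c A => (Matrix.normedSpace (R := K) (α := K)).norm_smul_le c A }

end UltrametricMatrix

section MatrixLogarithm

open Topology

variable {p : ℕ} [hp : Fact p.Prime] {ι : Type*} [Fintype ι] [DecidableEq ι]

theorem tendsto_inv_smul_matrix_pow_sub_one {M L : Matrix ι ι ℚ_[p]}
    (hM : ∀ i j, ‖(M - 1) i j‖ < 1)
    (hL : Tendsto (fun m : ℕ => ∑ j ∈ Finset.Icc 1 m,
      ((-1 : ℚ_[p]) ^ (j - 1) / (j : ℚ_[p])) • (M - 1) ^ j) atTop (𝓝 L)) :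
    Tendsto (fun n : ℕ => ((p : ℚ_[p]) ^ n)⁻¹ • (M ^ p ^ n - 1)) atTop (𝓝 L) := by
  let normedRing := ultrametricMatrixNormedRing ι ℚ_[p]
  let := ultrametricMatrixNormedAlgebra ι ℚ_[p]
  have : @CompleteSpace (Matrix ι ι ℚ_[p]) normedRing.toPseudoMetricSpace.toUniformSpace :=
    inferInstanceAs (CompleteSpace (ι → ι → ℚ_[p]))
  have hnorm : ‖M - 1‖ < 1 := (Matrix.norm_lt_iff one_pos).mpr hM
  rw [tendsto_nhds_unique hL (tendsto_sum_Icc_padicLog hnorm)]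
  exact tendsto_inv_smul_pow_sub_one_padicLog hnorm

end MatrixLogarithm

section UnitPart

open Topology

variable {p : ℕ} [hp : Fact p.Prime]

/-- The `p′`-part `x · p^{-v_p(x)}` of a `p`-adic number, which is a unit of `ℤ_p` unless
`x = 0`. -/
noncomputable def padicUnitPart (x : ℚ_[p]) : ℚ_[p] :=
  x * (p : ℚ_[p]) ^ (-x.valuation)

theorem norm_padicUnitPart {x : ℚ_[p]} (hx : x ≠ 0) : ‖padicUnitPart x‖ = 1 := by
  have hp0 : (p : ℝ) ≠ 0 := Nat.cast_ne_zero.mpr hp.out.ne_zero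
  rw [padicUnitPart, norm_mul, Padic.norm_eq_zpow_neg_valuation hx, Padic.norm_p_zpow, neg_neg,
    ← zpow_add₀ hp0, neg_add_cancel, zpow_zero]

theorem padicUnitPart_mul {x y : ℚ_[p]} (hx : x ≠ 0) (hy : y ≠ 0) :
    padicUnitPart (x * y) = padicUnitPart x * padicUnitPart y := by
  have hp0 : (p : ℚ_[p]) ≠ 0 := Nat.cast_ne_zero.mpr hp.out.ne_zero
  rw [padicUnitPart, Padic.valuation_mul hx hy, neg_add, zpow_add₀ hp0, mul_mul_mul_comm]
  rfl

theorem padicUnitPart_zpow_prime (k : ℤ) : padicUnitPart ((p : ℚ_[p]) ^ k) = 1 := by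
  have hp0 : (p : ℚ_[p]) ≠ 0 := Nat.cast_ne_zero.mpr hp.out.ne_zero
  rw [padicUnitPart, Padic.valuation_zpow, Padic.valuation_p, mul_one, ← zpow_add₀ hp0,
    add_neg_cancel, zpow_zero]

theorem padicUnitPart_eq_of_norm_eq {x y : ℚ_[p]} (hx : x ≠ 0) (h : ‖y‖ = ‖x‖) :
    padicUnitPart y = y * (p : ℚ_[p]) ^ (-x.valuation) := by
  have hy : y ≠ 0 := norm_ne_zero_iff.mp (h ▸ norm_ne_zero_iff.mpr hx)
  have hp1 : (1 : ℝ) < p := Nat.one_lt_cast.mpr hp.out.one_lt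
  rw [Padic.norm_eq_zpow_neg_valuation hx, Padic.norm_eq_zpow_neg_valuation hy] at h
  rw [padicUnitPart, zpow_right_injective₀ (zero_lt_one.trans hp1) hp1.ne' h]

theorem padicUnitPart_neg (x : ℚ_[p]) : padicUnitPart (-x) = -padicUnitPart x := by
  rcases eq_or_ne x 0 with rfl | hx
  · simp [padicUnitPart]
  · rw [padicUnitPart_eq_of_norm_eq hx (norm_neg x), neg_mul, padicUnitPart]

theorem padicUnitPart_natCast (n : ℕ) :
    padicUnitPart (n : ℚ_[p]) = (n / p ^ n.factorization p : ℕ) := by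
  have hp0 : (p : ℚ_[p]) ≠ 0 := Nat.cast_ne_zero.mpr hp.out.ne_zero
  rw [padicUnitPart, Padic.valuation_natCast, ← Nat.factorization_def n hp.out, zpow_neg,
    zpow_natCast, ← div_eq_mul_inv, Nat.cast_div (Nat.ordProj_dvd n p)] <;> simp [hp0]

theorem padicUnitPart_natAbs (z : ℤ) :
    padicUnitPart (z.natAbs : ℚ_[p]) = z.sign * padicUnitPart (z : ℚ_[p]) := by
  rw [Nat.cast_natAbs]
  rcases lt_trichotomy z 0 with hz | rfl | hz
  · simp [abs_of_neg hz, Int.sign_eq_neg_one_of_neg hz, padicUnitPart_neg]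
  · simp [padicUnitPart]
  · simp [abs_of_pos hz, Int.sign_eq_one_of_pos hz]

theorem continuousAt_padicUnitPart {x : ℚ_[p]} (hx : x ≠ 0) : ContinuousAt padicUnitPart x := by
  have hval : ∀ᶠ y in 𝓝 x, y * (p : ℚ_[p]) ^ (-x.valuation) = padicUnitPart y := by
    filter_upwards [Metric.ball_mem_nhds x (norm_pos_iff.mpr hx)] with y hy
    rw [mem_ball_iff_norm] at hy
    rw [padicUnitPart_eq_of_norm_eq hx (Padic.norm_eq_of_norm_sub_lt_right hy)]
  exact (continuousAt_id.mul_const _).congr hval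

end UnitPart

section TorsionLimit

open Topology

variable {p : ℕ} [hp : Fact p.Prime] {ι : Type*} [DecidableEq ι]

theorem norm_intCast_eq_one_of_dvd_sub_one {u : ℤ} (hu : (p : ℤ) ∣ u - 1) : ‖(u : ℚ_[p])‖ = 1 := by
  rw [Padic.norm_intCast_eq_one_iff]
  obtain ⟨c, hc⟩ := hu
  exact ⟨1, -c, by linear_combination hc⟩

theorem norm_map_intCast_sub_one_apply_lt_one {A : Matrix ι ι ℤ}
    (hA1 : ∀ i j, (p : ℤ) ∣ (A - 1) i j) (i j : ι) :
    ‖(A.map (Int.cast : ℤ → ℚ_[p]) - 1) i j‖ < 1 := by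
  have hcast : (A.map (Int.cast : ℤ → ℚ_[p]) - 1) i j = ((A - 1) i j : ℤ) := by
    simp [Matrix.one_apply]
  rw [hcast]
  exact Padic.norm_intCast_lt_one_iff.mpr (hA1 i j)

variable [Fintype ι] {A : Matrix ι ι ℤ}

theorem det_inv_smul_map_pow_sub_one (A : Matrix ι ι ℤ) (n : ℕ) :
    (((p : ℚ_[p]) ^ n)⁻¹ • (A.map (Int.cast : ℤ → ℚ_[p]) ^ p ^ n - 1)).det =
      (p : ℚ_[p]) ^ (-(n * Fintype.card ι : ℤ)) * ((A ^ p ^ n - 1).det : ℤ) := by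
  have hmap : A.map (Int.cast : ℤ → ℚ_[p]) ^ p ^ n - 1 =
      (Int.castRingHom ℚ_[p]).mapMatrix (A ^ p ^ n - 1) := by
    rw [map_sub, map_pow, map_one]
    rfl
  rw [hmap, Matrix.det_smul, ← RingHom.map_det, zpow_neg, zpow_mul, zpow_natCast, zpow_natCast,
    inv_pow]
  rfl

theorem det_pow_prime_pow_sub_one_ne_zero (hA : (p : Matrix ι ι ℤ) ∣ A - 1)
    (hdet : (A ^ p - 1).det ≠ 0) : ∀ n : ℕ, (A ^ p ^ n - 1).det ≠ 0
  | 0 => by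
    rw [← mul_geom_sum, Matrix.det_mul] at hdet
    simpa using left_ne_zero_of_mul hdet
  | 1 => by simpa using hdet
  | n + 2 => by
    obtain ⟨u, hu, hstep⟩ := exists_det_pow_pow_sub_one_eq hA n
    have hu0 : u ≠ 0 := by
      rintro rfl
      simpa using norm_intCast_eq_one_of_dvd_sub_one hu
    rw [hstep]
    exact mul_ne_zero (mul_ne_zero (pow_ne_zero _ (Nat.cast_ne_zero.mpr hp.out.ne_zero))
      (det_pow_prime_pow_sub_one_ne_zero hA hdet (n + 1))) hu0

theorem norm_det_inv_smul_map_pow_sub_one (hA : (p : Matrix ι ι ℤ) ∣ A - 1) (n : ℕ) :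
    ‖(((p : ℚ_[p]) ^ (n + 1))⁻¹ • (A.map (Int.cast : ℤ → ℚ_[p]) ^ p ^ (n + 1) - 1)).det‖ =
      ‖((p : ℚ_[p])⁻¹ • (A.map (Int.cast : ℤ → ℚ_[p]) ^ p - 1)).det‖ := by
  induction n with
  | zero => simp
  | succ n ih =>
    obtain ⟨u, hu, hstep⟩ := exists_det_pow_pow_sub_one_eq hA n
    have hp0 : (p : ℚ_[p]) ≠ 0 := Nat.cast_ne_zero.mpr hp.out.ne_zero
    rw [← ih, det_inv_smul_map_pow_sub_one, det_inv_smul_map_pow_sub_one, hstep]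
    push_cast
    rw [mul_comm _ (u : ℚ_[p]), mul_left_comm, norm_mul, norm_intCast_eq_one_of_dvd_sub_one hu,
      one_mul, ← mul_assoc, ← zpow_natCast, ← zpow_add₀ hp0]
    congr 4
    ring

variable {L : Matrix ι ι ℚ_[p]}

theorem det_log_ne_zero (hA : (p : Matrix ι ι ℤ) ∣ A - 1) (hdet : (A ^ p - 1).det ≠ 0)
    (hlim : Tendsto (fun n : ℕ => ((p : ℚ_[p]) ^ n)⁻¹ •
      (A.map (Int.cast : ℤ → ℚ_[p]) ^ p ^ n - 1)) atTop (𝓝 L)) :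
    L.det ≠ 0 := by
  have hp0 : (p : ℚ_[p]) ≠ 0 := Nat.cast_ne_zero.mpr hp.out.ne_zero
  have hlimdet := (((continuous_id.matrix_det).tendsto L).comp hlim).norm
  have hnorm : ‖L.det‖ = ‖((p : ℚ_[p])⁻¹ • (A.map (Int.cast : ℤ → ℚ_[p]) ^ p - 1)).det‖ :=
    tendsto_nhds_unique ((tendsto_add_atTop_iff_nat 1).mpr hlimdet)
      (tendsto_const_nhds.congr fun n => (norm_det_inv_smul_map_pow_sub_one hA n).symm)
  have hone := det_inv_smul_map_pow_sub_one (p := p) A 1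
  rw [pow_one, pow_one] at hone
  rw [← norm_ne_zero_iff, hnorm, norm_ne_zero_iff, hone]
  exact mul_ne_zero (zpow_ne_zero _ hp0) (Int.cast_ne_zero.mpr hdet)

theorem padicUnitPart_det_inv_smul_map_pow_sub_one {n : ℕ} (h : (A ^ p ^ n - 1).det ≠ 0) :
    padicUnitPart (((p : ℚ_[p]) ^ n)⁻¹ • (A.map (Int.cast : ℤ → ℚ_[p]) ^ p ^ n - 1)).det =
      padicUnitPart ((A ^ p ^ n - 1).det : ℚ_[p]) := by
  have hp0 : (p : ℚ_[p]) ≠ 0 := Nat.cast_ne_zero.mpr hp.out.ne_zero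
  rw [det_inv_smul_map_pow_sub_one, padicUnitPart_mul (zpow_ne_zero _ hp0) (Int.cast_ne_zero.mpr h),
    padicUnitPart_zpow_prime, one_mul]

theorem tendsto_natAbs_det_pprime_part (hne : ∀ n : ℕ, (A ^ p ^ n - 1).det ≠ 0) {ε : ℤ}
    (hε : ∀ n : ℕ, (A ^ p ^ (n + 1) - 1).det.sign = ε)
    (hlim : Tendsto (fun n : ℕ => ((p : ℚ_[p]) ^ n)⁻¹ •
      (A.map (Int.cast : ℤ → ℚ_[p]) ^ p ^ n - 1)) atTop (𝓝 L)) (hL : L.det ≠ 0) :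
    Tendsto (fun n : ℕ => (((A ^ p ^ n - 1).det.natAbs /
      p ^ (A ^ p ^ n - 1).det.natAbs.factorization p : ℕ) : ℚ_[p])) atTop
      (𝓝 (ε * padicUnitPart L.det)) := by
  have hunit := (continuousAt_padicUnitPart hL).tendsto.comp
    (((continuous_id.matrix_det).tendsto L).comp hlim)
  refine (tendsto_add_atTop_iff_nat 1).mp
    ((((tendsto_add_atTop_iff_nat 1).mpr hunit).const_mul (ε : ℚ_[p])).congr fun n => ?_)
  rw [← padicUnitPart_natCast, padicUnitPart_natAbs, hε n]
  exact congrArg (_ * ·) (padicUnitPart_det_inv_smul_map_pow_sub_one (hne (n + 1)))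

end TorsionLimit

theorem padic_limit_torsion_pprime_part_general {p : ℕ} [hp : Fact p.Prime] {ι : Type*} [Fintype ι]
    [DecidableEq ι] {A : Matrix ι ι ℤ} (hA1 : ∀ i j, (p : ℤ) ∣ (A - 1) i j)
    (hdet : (A ^ p - 1).det ≠ 0) {ε : ℤ}
    (hε : ε = if p = 2 then Int.sign ((A ^ 2 - 1).det) else Int.sign ((A - 1).det))
    {L : Matrix ι ι ℚ_[p]}
    (hL : Tendsto (fun m : ℕ => ∑ j ∈ Finset.Icc 1 m,
        ((-1 : ℚ_[p]) ^ (j - 1) / (j : ℚ_[p])) •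
          (A.map (Int.cast : ℤ → ℚ_[p]) - 1) ^ j) atTop (nhds L))
    {t : ℕ → ℕ}
    (ht : ∀ n, t n = (A ^ p ^ n - 1).det.natAbs /
        p ^ ((A ^ p ^ n - 1).det.natAbs.factorization p)) :
    (∀ n : ℕ, (A ^ p ^ n - 1).det ≠ 0) ∧ L.det ≠ 0 ∧
      ∃ T : ℤ_[p], (T : ℚ_[p]) = (ε : ℚ_[p]) * L.det * (p : ℚ_[p]) ^ (-(L.det.valuation)) ∧
        Tendsto (fun n => ((t n : ℤ_[p]))) atTop (nhds T) := by
  have hA := natCast_dvd_of_forall_dvd_apply hA1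
  have hne := det_pow_prime_pow_sub_one_ne_zero hA hdet
  have hlim := tendsto_inv_smul_matrix_pow_sub_one (norm_map_intCast_sub_one_apply_lt_one hA1) hL
  have hL0 := det_log_ne_zero hA hdet hlim
  have ht_lim := tendsto_natAbs_det_pprime_part hne
    (fun n => (sign_det_pow_prime_pow_sub_one hne n).trans hε.symm) hlim hL0
  have hT : ‖(ε : ℚ_[p]) * padicUnitPart L.det‖ ≤ 1 := by
    rw [norm_mul, norm_padicUnitPart hL0, mul_one]
    exact Padic.norm_int_le_one ε
  refine ⟨hne, hL0, ⟨_, hT⟩, (mul_assoc _ _ _).symm, tendsto_subtype_rng.mpr ?_⟩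
  simpa only [ht, PadicInt.coe_natCast] using ht_lim

/-- Let `A ∈ GL_N(ℤ)` with `A ≡ 1 (mod p)` and no eigenvalue a root of unity, and let
`L = log A ∈ M_N(ℚ_p)`.  Then `det(A^{p^n} - 1)` is a nonzero integer, `det L ≠ 0`, and
the `p′`-parts `t_n` of `|det(A^{p^n} - 1)|` converge in `ℤ_p` to
`ε · det(L) · p^{-v_p(det L)}`, where `ε = sign det(A-1)` for `p` odd and
`ε = sign det(A²-1)` for `p = 2`. -/
theorem padic_limit_torsion_pprime_part (p : ℕ) [hp : Fact p.Prime] (N : ℕ) (hN : 1 ≤ N)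
    (A : Matrix (Fin N) (Fin N) ℤ) (hunit : IsUnit A.det)
    (hA1 : ∀ i j, (p : ℤ) ∣ (A - 1) i j)
    (hroot : ∀ ζ : ℂ, Polynomial.aeval ζ A.charpoly = 0 → ∀ n : ℕ, 0 < n → ζ ^ n ≠ 1)
    (ε : ℤ)
    (hε : ε = if p = 2 then Int.sign ((A ^ 2 - 1).det) else Int.sign ((A - 1).det))
    (L : Matrix (Fin N) (Fin N) ℚ_[p])
    (hL : Tendsto (fun m : ℕ => ∑ j ∈ Finset.Icc 1 m,
        ((-1 : ℚ_[p]) ^ (j - 1) / (j : ℚ_[p])) •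
          (A.map (Int.cast : ℤ → ℚ_[p]) - 1) ^ j) atTop (nhds L))
    (t : ℕ → ℕ)
    (ht : ∀ n, t n = (A ^ p ^ n - 1).det.natAbs /
        p ^ ((A ^ p ^ n - 1).det.natAbs.factorization p)) :
    (∀ n : ℕ, (A ^ p ^ n - 1).det ≠ 0) ∧ L.det ≠ 0 ∧
      ∃ T : ℤ_[p], (T : ℚ_[p]) = (ε : ℚ_[p]) * L.det * (p : ℚ_[p]) ^ (-(L.det.valuation)) ∧
        Tendsto (fun n => ((t n : ℤ_[p]))) atTop (nhds T) :=
  padic_limit_torsion_pprime_part_general hA1 (det_pow_sub_one_ne_zero hroot hp.out.pos) hε hL ht
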